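/- Let Ω ⊂ ℝ^m be a bounded open box and let g : ℝ^m → ℝ be infinitely differentiable such that the level set S := g⁻¹(0) is nonempty, compact, contained in Ω, and satisfies ∇g(x) ≠ 0 for all x ∈ S. Let U be an open neighborhood of S and f : U → ℝ an infinitely differentiable function. Then there exists an infinitely differentiable function f̃ : ℝ^m → ℝ whose support is compact and contained in Ω, such that f̃(x) = f(x) for all x ∈ S and ∇g(x)·∇f̃(x) = 0 for all x ∈ S. That is, f admits a smooth, compactly supported (hence periodically extendable) first-order Closest Point-like extension to the box Ω. -/

import Mathlib

open scoped BigOperators RealInnerProductSpace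

/-!
Moving from `x` along `v` by one Newton step for the equation `g = 0` lands at
`x - (g x / D_v g x) v`, which agrees to first order with the projection of `x` onto `{g = 0}`
along `v`. Linearizing `f` at `x` and evaluating at this point gives `f - g (D_v f / D_v g)`. On
`{g = 0}` it equals `f` and its derivative along `v` is `D_v f - D_v g (D_v f / D_v g) = 0`. It is
smooth where `f`, `g` and `v` are and `D_v g ≠ 0`, so a cutoff equal to one near the compact surface
makes it global. The closest point extension is the case `v = ∇g`.
-/

open scoped Topology Gradient

section Calculus

variable {𝕜 E F : Type*} [NontriviallyNormedField 𝕜]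
  [NormedAddCommGroup E] [NormedSpace 𝕜 E] [NormedAddCommGroup F] [NormedSpace 𝕜 F]

theorem hasFDerivAt_smul_of_eq_zero {g : E → 𝕜} {g' : E →L[𝕜] 𝕜} {w : E → F} {x : E}
    (hg : HasFDerivAt g g' x) (hgx : g x = 0) (hw : ContinuousAt w x) :
    HasFDerivAt (fun y => g y • w y) (g'.smulRight (w x)) x := by
  have h_fixed : HasFDerivAt (fun y => g y • w x) (g'.smulRight (w x)) x := hg.smul_const (w x)
  have h_remainder : HasFDerivAt (fun y => g y • (w y - w x)) (0 : E →L[𝕜] F) x := by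
    have hg_bigO : g =O[𝓝 x] fun y => y - x := by simpa [hgx] using hg.isBigO_sub
    have hw_littleO : (fun y => w y - w x) =o[𝓝 x] fun _ => (1 : ℝ) :=
      (Asymptotics.isLittleO_one_iff ℝ).2 (tendsto_sub_nhds_zero_iff.2 hw)
    refine .of_isLittleO ?_
    simpa [hgx] using hg_bigO.norm_right.smul_isLittleO hw_littleO
  convert h_fixed.add h_remainder using 1
  · ext y
    simp [smul_sub]
  · rw [add_zero]

/-- The derivative of `f` relative to `g` along the vector field `v`, that is `D_v f / D_v g`;
it is `0` where `D_v g` vanishes. -/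
noncomputable def relDerivAlong (v : E → E) (g : E → 𝕜) (f : E → F) (x : E) : F :=
  (fderiv 𝕜 g x (v x))⁻¹ • fderiv 𝕜 f x (v x)

/-- The modification `f - g (D_v f / D_v g)` of `f`, which keeps the values of `f` on `{g = 0}` and
removes its derivative along `v` there, provided `D_v g ≠ 0`. -/
noncomputable def flattenAlong (v : E → E) (g : E → 𝕜) (f : E → F) (x : E) : F :=
  f x - g x • relDerivAlong v g f x

variable {v : E → E} {g : E → 𝕜} {f : E → F} {x : E} {n : WithTop ℕ∞}

theorem contDiffAt_relDerivAlong (hv : ContDiffAt 𝕜 n v x) (hg : ContDiffAt 𝕜 (n + 1) g x)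
    (hf : ContDiffAt 𝕜 (n + 1) f x) (hgv : fderiv 𝕜 g x (v x) ≠ 0) :
    ContDiffAt 𝕜 n (relDerivAlong v g f) x :=
  ((hg.fderiv_right_succ.clm_apply hv).inv hgv).smul (hf.fderiv_right_succ.clm_apply hv)

theorem contDiffAt_flattenAlong (hv : ContDiffAt 𝕜 n v x) (hg : ContDiffAt 𝕜 (n + 1) g x)
    (hf : ContDiffAt 𝕜 (n + 1) f x) (hgv : fderiv 𝕜 g x (v x) ≠ 0) :
    ContDiffAt 𝕜 n (flattenAlong v g f) x :=
  (hf.of_le le_self_add).sub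
    ((hg.of_le le_self_add).smul (contDiffAt_relDerivAlong hv hg hf hgv))

theorem flattenAlong_of_eq_zero (hgx : g x = 0) : flattenAlong v g f x = f x := by
  simp [flattenAlong, hgx]

theorem hasLineDerivAt_flattenAlong_of_eq_zero (hgx : g x = 0) (hg : DifferentiableAt 𝕜 g x)
    (hf : DifferentiableAt 𝕜 f x) (hgv : fderiv 𝕜 g x (v x) ≠ 0)
    (hrel : ContinuousAt (relDerivAlong v g f) x) :
    HasLineDerivAt 𝕜 (flattenAlong v g f) 0 x (v x) := by
  have h_deriv : HasFDerivAt (flattenAlong v g f)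
      (fderiv 𝕜 f x - (fderiv 𝕜 g x).smulRight (relDerivAlong v g f x)) x :=
    hf.hasFDerivAt.sub (hasFDerivAt_smul_of_eq_zero hg.hasFDerivAt hgx hrel)
  have h_cancel :
      (fderiv 𝕜 f x - (fderiv 𝕜 g x).smulRight (relDerivAlong v g f x)) (v x) = 0 := by
    simp [relDerivAlong, smul_inv_smul₀ hgv]
  exact h_cancel ▸ h_deriv.hasLineDerivAt (v x)

end Calculus

section Cutoff

variable {E F : Type*} [NormedAddCommGroup E] [NormedSpace ℝ E] [FiniteDimensional ℝ E]
  [NormedAddCommGroup F] [NormedSpace ℝ F]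

theorem exists_contDiff_one_nhdsSet_tsupport_subset {K U : Set E} (hK : IsCompact K)
    (hU : IsOpen U) (hKU : K ⊆ U) (n : ℕ∞) :
    ∃ χ : E → ℝ, ContDiff ℝ n χ ∧ HasCompactSupport χ ∧ tsupport χ ⊆ U ∧
      χ =ᶠ[𝓝ˢ K] fun _ => 1 := by
  obtain ⟨L, hL, hKL, hLU⟩ := exists_compact_between hK hU hKU
  obtain ⟨χ, hχ_one, hχ_zero, -⟩ := exists_contMDiffMap_one_nhds_of_subset_interior (n := n)
    (modelWithCornersSelf ℝ E) hK.isClosed hKL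
  have hχL : tsupport χ ⊆ L :=
    closure_minimal (Function.support_subset_iff'.2 hχ_zero) hL.isClosed
  exact ⟨χ, χ.contMDiff.contDiff, .intro hL hχ_zero, hχL.trans hLU, hχ_one⟩

theorem exists_contDiff_hasCompactSupport_eventuallyEq_nhdsSet {K U : Set E} {h : E → F} {n : ℕ∞}
    (hK : IsCompact K) (hU : IsOpen U) (hKU : K ⊆ U) (hh : ContDiffOn ℝ n h U) :
    ∃ h' : E → F, ContDiff ℝ n h' ∧ HasCompactSupport h' ∧ tsupport h' ⊆ U ∧ h' =ᶠ[𝓝ˢ K] h := by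
  obtain ⟨χ, hχ, hχ_cpt, hχU, hχ_one⟩ :=
    exists_contDiff_one_nhdsSet_tsupport_subset hK hU hKU n
  have h_tsupport : tsupport (fun x => χ x • h x) ⊆ U := (tsupport_smul_subset_left χ h).trans hχU
  refine ⟨fun x => χ x • h x, ?_, hχ_cpt.smul_right, h_tsupport, ?_⟩
  · exact (contMDiff_of_tsupport fun x hx =>
      (hχ.contDiffAt.smul (hh.contDiffAt (hU.mem_nhds (h_tsupport hx)))).contMDiffAt).contDiff
  · filter_upwards [hχ_one] with x hx
    rw [hx, one_smul]

theorem smooth_cp_like_extension_exists_general {S U : Set E} {v : E → E} {g : E → ℝ} {f : E → F}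
    {n : ℕ∞} (hS : IsCompact S) (hU : IsOpen U) (hSU : S ⊆ U) (hv : ContDiffOn ℝ n v U)
    (hg : ContDiffOn ℝ (n + 1) g U) (hgS : ∀ x ∈ S, g x = 0)
    (hgv : ∀ x ∈ S, fderiv ℝ g x (v x) ≠ 0) (hf : ContDiffOn ℝ (n + 1) f U) :
    ∃ ftil : E → F, ContDiff ℝ n ftil ∧ HasCompactSupport ftil ∧ tsupport ftil ⊆ U ∧
      (∀ x ∈ S, ftil x = f x) ∧ ∀ x ∈ S, HasLineDerivAt ℝ ftil 0 x (v x) := by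
  set W : Set E := U ∩ {x | fderiv ℝ g x (v x) ≠ 0}
  have hW : IsOpen W :=
    ((hg.fderiv_of_isOpen hU le_rfl).clm_apply hv).continuousOn.isOpen_inter_preimage hU
      isOpen_ne
  have hSW : S ⊆ W := fun x hx => ⟨hSU hx, hgv x hx⟩
  have hU_nhds : ∀ x ∈ W, U ∈ 𝓝 x := fun x hx => hU.mem_nhds hx.1
  have hvW : ∀ x ∈ W, ContDiffAt ℝ n v x := fun x hx => hv.contDiffAt (hU_nhds x hx)
  have hgW : ∀ x ∈ W, ContDiffAt ℝ (n + 1) g x := fun x hx => hg.contDiffAt (hU_nhds x hx)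
  have hfW : ∀ x ∈ W, ContDiffAt ℝ (n + 1) f x := fun x hx => hf.contDiffAt (hU_nhds x hx)
  obtain ⟨ftil, h_smooth, h_cpt, h_tsupport, h_near⟩ :=
    exists_contDiff_hasCompactSupport_eventuallyEq_nhdsSet hS hW hSW (h := flattenAlong v g f)
      fun x hx => (contDiffAt_flattenAlong (hvW _ hx) (hgW _ hx) (hfW _ hx)
        hx.2).contDiffWithinAt
  refine ⟨ftil, h_smooth, h_cpt, h_tsupport.trans Set.inter_subset_left, fun x hx => ?_,
    fun x hx => ?_⟩
  · exact (h_near.filter_mono (nhds_le_nhdsSet hx)).eq_of_nhds.trans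
      (flattenAlong_of_eq_zero (hgS x hx))
  · have hxW : x ∈ W := hSW hx
    have h_rel : ContinuousAt (relDerivAlong v g f) x :=
      (contDiffAt_relDerivAlong (hvW x hxW) (hgW x hxW) (hfW x hxW) hxW.2).continuousAt
    have h_line : HasLineDerivAt ℝ (flattenAlong v g f) 0 x (v x) :=
      hasLineDerivAt_flattenAlong_of_eq_zero (hgS x hx) ((hgW x hxW).differentiableAt (by simp))
        ((hfW x hxW).differentiableAt (by simp)) hxW.2 h_rel
    exact h_line.congr_of_eventuallyEq (h_near.filter_mono (nhds_le_nhdsSet hx))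

end Cutoff

section Gradient

variable {E : Type*} [NormedAddCommGroup E] [InnerProductSpace ℝ E] [CompleteSpace E]

theorem contDiff_gradient {g : E → ℝ} {n : WithTop ℕ∞} (hg : ContDiff ℝ (n + 1) g) :
    ContDiff ℝ n (∇ g) :=
  (InnerProductSpace.toDual ℝ E).symm.contDiff.comp (hg.fderiv_right le_rfl)

theorem fderiv_gradient_ne_zero {g : E → ℝ} {x : E} (hgx : ∇ g x ≠ 0) :
    fderiv ℝ g x (∇ g x) ≠ 0 := by
  rwa [← inner_gradient_left, inner_self_ne_zero]

theorem inner_gradient_of_hasLineDerivAt {f : E → ℝ} {f' : ℝ} {x v : E}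
    (hf : DifferentiableAt ℝ f x) (hline : HasLineDerivAt ℝ f f' x v) : ⟪v, ∇ f x⟫ = f' := by
  rw [real_inner_comm, inner_gradient_left, ← hf.lineDeriv_eq_fderiv, hline.lineDeriv]

end Gradient

theorem isOpen_setOf_forall_apply_mem {ι : Type*} [Finite ι] {β : ι → Type*}
    [∀ i, TopologicalSpace (β i)] {p : ENNReal} {s : ∀ i, Set (β i)} (hs : ∀ i, IsOpen (s i)) :
    IsOpen {x : PiLp p β | ∀ i, x i ∈ s i} := by
  rw [Set.ofPred_forall]
  exact isOpen_iInter_of_finite fun i => (hs i).preimage (PiLp.continuous_apply p β i)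

/-- any smooth function defined near a compact smooth level-set hypersurface
`S = g⁻¹(0)` contained in an open box `Ω` admits a smooth, compactly supported (in `Ω`)
first-order Closest Point-like extension: it agrees with `f` on `S` and its derivative in
the normal direction `∇g` vanishes on `S`. -/
theorem smooth_cp_like_extension_exists
    (m : ℕ) (Ω : Set (EuclideanSpace ℝ (Fin m)))
    (a b : Fin m → ℝ) (hab : ∀ i, a i < b i)
    (hΩ : Ω = {x : EuclideanSpace ℝ (Fin m) | ∀ i, x i ∈ Set.Ioo (a i) (b i)})
    (g : EuclideanSpace ℝ (Fin m) → ℝ) (hg : ContDiff ℝ (⊤ : ℕ∞) g)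
    (hSne : (g ⁻¹' {0}).Nonempty)
    (hScpt : IsCompact (g ⁻¹' {0}))
    (hSΩ : g ⁻¹' {0} ⊆ Ω)
    (hgrad : ∀ x ∈ g ⁻¹' {0}, gradient g x ≠ 0)
    (U : Set (EuclideanSpace ℝ (Fin m))) (hU : IsOpen U) (hSU : g ⁻¹' {0} ⊆ U)
    (f : EuclideanSpace ℝ (Fin m) → ℝ) (hf : ContDiffOn ℝ (⊤ : ℕ∞) f U) :
    ∃ ftil : EuclideanSpace ℝ (Fin m) → ℝ,
      ContDiff ℝ (⊤ : ℕ∞) ftil ∧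
      HasCompactSupport ftil ∧
      tsupport ftil ⊆ Ω ∧
      (∀ x ∈ g ⁻¹' {0}, ftil x = f x) ∧
      (∀ x ∈ g ⁻¹' {0}, ⟪gradient g x, gradient ftil x⟫ = (0 : ℝ)) := by
  subst hΩ
  obtain ⟨ftil, h_smooth, h_cpt, h_tsupport, h_eq, h_line⟩ :=
    smooth_cp_like_extension_exists_general (n := ⊤) hScpt
      (hU.inter (isOpen_setOf_forall_apply_mem fun _ => isOpen_Ioo)) (Set.subset_inter hSU hSΩ)
      (contDiff_gradient hg).contDiffOn hg.contDiffOn (fun _ hx => hx)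
      (fun x hx => fderiv_gradient_ne_zero (hgrad x hx)) (hf.mono Set.inter_subset_left)
  exact ⟨ftil, h_smooth, h_cpt, h_tsupport.trans Set.inter_subset_right, h_eq, fun x hx =>
    inner_gradient_of_hasLineDerivAt (h_smooth.differentiable (by simp) x) (h_line x hx)⟩
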